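/- Let A ∈ 𝔰𝔭(ℝ⁶) with A ≠ 0 and set c := −½( tr(S_A²) + ½(tr JA)² + ( |[A,Aᵗ]|² + ⟨S_A ∘₆ S_A, [A,Aᵗ]⟩ )/|A|² ). Then c ≤ 0, and if c = 0 then A is skew-symmetric (Aᵗ = −A), tr(JA) = 0 and [J, A] = 0 (i.e. the full torsion tensor of the associated coclosed G₂-structure vanishes). Hence every (semi-)algebraic soliton of the Laplacian coflow on an almost Abelian Lie group is expanding, and it is steady only if it is torsion-free. -/

import Mathlib

open Matrix BigOperators

noncomputable section

abbrev M6 : Type := Matrix (Fin 6) (Fin 6) ℝ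
abbrev M7 : Type := Matrix (Fin 7) (Fin 7) ℝ

/-- The canonical almost complex structure `J` on `ℝ⁶`:
`Je₁ = e₂, Je₂ = −e₁, Je₃ = e₄, Je₄ = −e₃, Je₅ = e₆, Je₆ = −e₅` (0-based indices). -/
def J6 : M6 := Matrix.of fun i j =>
  if (i = 1 ∧ j = 0) ∨ (i = 3 ∧ j = 2) ∨ (i = 5 ∧ j = 4) then 1
  else if (i = 0 ∧ j = 1) ∨ (i = 2 ∧ j = 3) ∨ (i = 4 ∧ j = 5) then -1
  else 0

/-- `A ∈ 𝔰𝔭(ℝ⁶)` iff `AJ + JAᵗ = 0`. -/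
def inSp (A : M6) : Prop := A * J6 + J6 * Aᵀ = 0

/-- The symmetric part `S_A = ½(A + Aᵗ)`. -/
def symPart (A : M6) : M6 := (1/2 : ℝ) • (A + Aᵀ)

/-- Frobenius inner product `⟨X,Y⟩ = tr(XYᵗ)`. -/
def mdot {n : ℕ} (X Y : Matrix (Fin n) (Fin n) ℝ) : ℝ := (X * Yᵀ).trace

/-- Commutator `[X,Y] = XY − YX`. -/
def mcomm {n : ℕ} (X Y : Matrix (Fin n) (Fin n) ℝ) : Matrix (Fin n) (Fin n) ℝ := X * Y - Y * X

/-- Kronecker delta. -/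
def kdelta {n : ℕ} (x y : Fin n) : ℝ := if x = y then 1 else 0

/-- The totally antisymmetric 3-tensor `e^a ∧ e^b ∧ e^c` evaluated on `(e_i, e_j, e_k)`. -/
def alt3 {n : ℕ} (a b c i j k : Fin n) : ℝ :=
  Matrix.det !![kdelta a i, kdelta a j, kdelta a k;
                kdelta b i, kdelta b j, kdelta b k;
                kdelta c i, kdelta c j, kdelta c k]

/-- `ρ⁺ = e¹³⁵ − e¹⁴⁶ − e²⁴⁵ − e²³⁶` (here written with 0-based indices). -/
def rhoP (i j k : Fin 6) : ℝ :=
  alt3 0 2 4 i j k - alt3 0 3 5 i j k - alt3 1 3 4 i j k - alt3 1 2 5 i j k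

/-- `(h ∘₆ k)_{ab} = Σ_{m,n,p,q} h_{mn} k_{pq} ρ⁺_{mpa} ρ⁺_{nqb}`. -/
def circ6 (h k : M6) : M6 :=
  Matrix.of fun a b => ∑ m, ∑ n, ∑ p, ∑ q, h m n * k p q * rhoP m p a * rhoP n q b

/-- Embed a 6×6 block and a scalar as a block-diagonal 7×7 matrix `diag(M, x)`. -/
def blockDiag7 (M : M6) (x : ℝ) : M7 :=
  Matrix.of fun i j =>
    if hi : (i : ℕ) < 6 then
      (if hj : (j : ℕ) < 6 then M ⟨i, hi⟩ ⟨j, hj⟩ else 0)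
    else (if (j : ℕ) < 6 then 0 else x)

/-- The Lie bracket of the almost Abelian Lie algebra `𝔤_A = ℝ⁶ ⊕ ℝe₇`:
`[e₇, v] = Av` for `v ∈ ℝ⁶` and `[v, w] = 0` for `v, w ∈ ℝ⁶`. -/
def bracket7 (A : M6) (x y : Fin 7 → ℝ) : Fin 7 → ℝ :=
  x 6 • (blockDiag7 A 0).mulVec y - y 6 • (blockDiag7 A 0).mulVec x

/-- `D ∈ gl(ℝ⁷)` is a derivation of `𝔤_A`. -/
def IsDerivation7 (A : M6) (D : M7) : Prop :=
  ∀ x y : Fin 7 → ℝ,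
    D.mulVec (bracket7 A x y) = bracket7 A (D.mulVec x) y + bracket7 A x (D.mulVec y)

/-- `Q_A = diag(½[A,Aᵗ] + ½ S_A ∘₆ S_A , −½tr(S_A²) − ¼(tr JA)²)`, the matrix with
`Δ_A ψ = θ(Q_A)ψ`. -/
def QA (A : M6) : M7 :=
  blockDiag7 ((1/2 : ℝ) • mcomm A Aᵀ + (1/2 : ℝ) • circ6 (symPart A) (symPart A))
    (-(1/2) * (symPart A * symPart A).trace - (1/4) * ((J6 * A).trace)^2)

/-!
Identify `ℝ⁶` with `ℂ³` through the coordinates `dz`. A real matrix acts as `z ↦ W z + Z z̄`,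
and for `A ∈ 𝔰𝔭(ℝ⁶)` the matrix `W` is skew-Hermitian and `Z` is symmetric, with `S_A`
corresponding to `(0, Z)`. As `ρ⁺ = Re(dz¹ ∧ dz² ∧ dz³)`, the product `∘₆` is expressed by
adjugates, and `⟨S_A ∘₆ S_A, [A, Aᵗ]⟩ = 32 Re(det Z · tr W)`. The Cauchy–Schwarz inequality
`|tr W|² ≤ 3 tr(W Wᴴ)` and the inequality of arithmetic and geometric means
`27 |det Z|² ≤ tr(Z Zᴴ)³` show that this term, the only one in `-2c|A|²` without a sign, is
dominated by the others.
-/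

open scoped ComplexOrder

section Frobenius

variable {n : ℕ}

lemma mdot_self_nonneg (X : Matrix (Fin n) (Fin n) ℝ) : 0 ≤ mdot X X :=
  (posSemidef_self_mul_conjTranspose X).trace_nonneg

lemma mdot_self_eq_zero_iff {X : Matrix (Fin n) (Fin n) ℝ} : mdot X X = 0 ↔ X = 0 :=
  trace_mul_conjTranspose_self_eq_zero_iff

end Frobenius

lemma mdot_symPart_self (A : M6) :
    mdot (symPart A) (symPart A) = (symPart A * symPart A).trace := by
  rw [mdot, symPart, transpose_smul, transpose_add, transpose_transpose, add_comm Aᵀ]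

lemma symPart_eq_zero_iff {A : M6} : symPart A = 0 ↔ Aᵀ = -A := by
  rw [symPart, smul_eq_zero_iff_right (by norm_num), add_comm, add_eq_zero_iff_eq_neg]

lemma mdot_symPart_self_le (A : M6) : mdot (symPart A) (symPart A) ≤ mdot A A := by
  have pythagoras : mdot A A
      = mdot (symPart A) (symPart A) + (1 / 4) * mdot (A - Aᵀ) (A - Aᵀ) := by
    have htr : (Aᵀ * Aᵀ).trace = (A * A).trace := by rw [← transpose_mul, trace_transpose]
    have hcomm : (Aᵀ * A).trace = (A * Aᵀ).trace := trace_mul_comm _ _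
    simp only [mdot, symPart, transpose_smul, transpose_add, transpose_sub, transpose_transpose,
      Matrix.smul_mul, Matrix.mul_smul, Matrix.mul_add, Matrix.mul_sub, Matrix.add_mul,
      Matrix.sub_mul, trace_smul, trace_add, trace_sub, smul_eq_mul, htr, hcomm]
    ring
  linarith [mdot_self_nonneg (A - Aᵀ)]

lemma card_pow_mul_prod_le_sum_pow {ι : Type*} (s : Finset ι) (z : ι → ℝ)
    (hz : ∀ i ∈ s, 0 ≤ z i) : (s.card : ℝ) ^ s.card * ∏ i ∈ s, z i ≤ (∑ i ∈ s, z i) ^ s.card := by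
  rcases s.eq_empty_or_nonempty with rfl | hs
  · simp
  have hcard : (0 : ℝ) < s.card := by exact_mod_cast hs.card_pos
  have hprod : 0 ≤ ∏ i ∈ s, z i := Finset.prod_nonneg hz
  have amgm : (∏ i ∈ s, z i) ^ ((s.card : ℝ)⁻¹) ≤ (∑ i ∈ s, z i) / s.card := by
    simpa using Real.geom_mean_le_arith_mean s 1 z (by simp) (by simpa using hs) hz
  calc (s.card : ℝ) ^ s.card * ∏ i ∈ s, z i
      = (s.card * (∏ i ∈ s, z i) ^ ((s.card : ℝ)⁻¹)) ^ s.card := by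
        rw [mul_pow, Real.rpow_inv_natCast_pow hprod hs.card_ne_zero]
    _ ≤ (∑ i ∈ s, z i) ^ s.card := by
        gcongr
        rwa [mul_comm, ← le_div_iff₀ hcard]

lemma card_pow_mul_det_le_trace_pow {𝕜 n : Type*} [RCLike 𝕜] [Fintype n] [DecidableEq n]
    {P : Matrix n n 𝕜} (hP : P.PosSemidef) :
    (Fintype.card n : ℝ) ^ Fintype.card n * RCLike.re P.det
      ≤ RCLike.re P.trace ^ Fintype.card n := by
  have hdet : RCLike.re P.det = ∏ i, hP.isHermitian.eigenvalues i := by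
    rw [hP.isHermitian.det_eq_prod_eigenvalues, ← RCLike.ofReal_prod, RCLike.ofReal_re]
  have htrace : RCLike.re P.trace = ∑ i, hP.isHermitian.eigenvalues i := by
    rw [hP.isHermitian.trace_eq_sum_eigenvalues, ← RCLike.ofReal_sum, RCLike.ofReal_re]
  rw [hdet, htrace]
  exact card_pow_mul_prod_le_sum_pow _ _ fun i _ => hP.eigenvalues_nonneg i

lemma card_pow_mul_norm_det_sq_le {𝕜 n : Type*} [RCLike 𝕜] [Fintype n] [DecidableEq n]
    (M : Matrix n n 𝕜) :
    (Fintype.card n : ℝ) ^ Fintype.card n * ‖M.det‖ ^ 2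
      ≤ RCLike.re (M * Mᴴ).trace ^ Fintype.card n := by
  have hdet : RCLike.re (M * Mᴴ).det = ‖M.det‖ ^ 2 := by
    rw [det_mul, det_conjTranspose, RCLike.star_def, RCLike.mul_conj, ← RCLike.ofReal_pow,
      RCLike.ofReal_re]
  simpa only [hdet] using card_pow_mul_det_le_trace_pow (posSemidef_self_mul_conjTranspose M)

lemma norm_trace_sq_le_card_mul {𝕜 n : Type*} [RCLike 𝕜] [Fintype n] (M : Matrix n n 𝕜) :
    ‖M.trace‖ ^ 2 ≤ Fintype.card n * RCLike.re (M * Mᴴ).trace := by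
  have hentries : RCLike.re (M * Mᴴ).trace = ∑ i, ∑ j, ‖M i j‖ ^ 2 := by
    simp only [trace, diag_apply, mul_apply, conjTranspose_apply, RCLike.star_def, RCLike.mul_conj,
      map_sum, ← RCLike.ofReal_pow, RCLike.ofReal_re]
  calc ‖M.trace‖ ^ 2 ≤ (∑ i, ‖M i i‖) ^ 2 := by gcongr; exact norm_sum_le _ _
    _ ≤ Fintype.card n * ∑ i, ‖M i i‖ ^ 2 := sq_sum_le_card_mul_sum_sq
    _ ≤ Fintype.card n * RCLike.re (M * Mᴴ).trace := by
        rw [hentries]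
        gcongr with i
        exact Finset.single_le_sum (f := fun j => ‖M i j‖ ^ 2) (fun j _ => sq_nonneg _)
          (Finset.mem_univ i)

lemma sum_mul_mul_eq_dotProduct_mulVec_mul {R ι κ : Type*} [CommSemiring R] [Fintype ι]
    [Fintype κ] (h : Matrix ι κ R) (a b : ι → R) (c d : κ → R) :
    ∑ m, ∑ n, ∑ p, ∑ q, h m n * h p q * (a m * c n * (b p * d q))
      = (a ⬝ᵥ h *ᵥ c) * (b ⬝ᵥ h *ᵥ d) := by
  have bilin (x : ι → R) (y : κ → R) : x ⬝ᵥ h *ᵥ y = ∑ m, ∑ n, h m n * (x m * y n) := by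
    simp only [dotProduct, mulVec, Finset.mul_sum]
    exact Finset.sum_congr rfl fun m _ => Finset.sum_congr rfl fun n _ => by ring
  simp_rw [bilin, Finset.sum_mul, Finset.mul_sum, mul_mul_mul_comm]

section MinorSums

variable {R ι κ : Type*} [CommRing R] [Fintype ι] [Fintype κ]

lemma sum_mul_minor_mul_minor (h : Matrix ι κ R) (a b : ι → R) (c d : κ → R) :
    ∑ m, ∑ n, ∑ p, ∑ q,
        h m n * h p q * ((a m * b p - b m * a p) * (c n * d q - d n * c q))
      = 2 * ((a ⬝ᵥ h *ᵥ c) * (b ⬝ᵥ h *ᵥ d) - (a ⬝ᵥ h *ᵥ d) * (b ⬝ᵥ h *ᵥ c)) := by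
  have expand (m n p q) :
      h m n * h p q * ((a m * b p - b m * a p) * (c n * d q - d n * c q))
        = h m n * h p q * (a m * c n * (b p * d q)) - h m n * h p q * (a m * d n * (b p * c q))
          - h m n * h p q * (b m * c n * (a p * d q))
          + h m n * h p q * (b m * d n * (a p * c q)) := by ring
  simp only [expand, Finset.sum_add_distrib, Finset.sum_sub_distrib,
    sum_mul_mul_eq_dotProduct_mulVec_mul]
  ring

-- The entries of the cross products are the `2 × 2` minors of `P` and `Q`, so this is the
-- Cauchy–Binet formula for the minors of `P * h * Qᵀ`.
lemma sum_mul_cross_mul_cross (h : Matrix ι κ R) (P : Matrix (Fin 3) ι R)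
    (Q : Matrix (Fin 3) κ R) (i j : Fin 3) :
    ∑ m, ∑ n, ∑ p, ∑ q, h m n * h p q * ((Pᵀ m ⨯₃ Pᵀ p) i * (Qᵀ n ⨯₃ Qᵀ q) j)
      = 2 * (P * h * Qᵀ).adjugate j i := by
  have entry (k l : Fin 3) : (P * h * Qᵀ) k l = P k ⬝ᵥ h *ᵥ Q l := by
    rw [Matrix.mul_assoc]; rfl
  rw [adjugate_fin_three]
  fin_cases i <;> fin_cases j <;>
    simp only [Fin.zero_eta, Fin.mk_one, Fin.reduceFinMk, cross_apply, transpose_apply, entry,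
      sum_mul_minor_mul_minor, of_apply, cons_val] <;>
    ring

lemma sum_mul_tripleProduct_mul_tripleProduct (h : Matrix ι κ R) (P : Matrix (Fin 3) ι R)
    (Q : Matrix (Fin 3) κ R) (u v : Fin 3 → R) :
    ∑ m, ∑ n, ∑ p, ∑ q,
        h m n * h p q * ((Pᵀ m ⨯₃ Pᵀ p ⬝ᵥ u) * (Qᵀ n ⨯₃ Qᵀ q ⬝ᵥ v))
      = 2 * (u ⬝ᵥ (P * h * Qᵀ).adjugateᵀ *ᵥ v) := by
  have expand (m n p q) : h m n * h p q * ((Pᵀ m ⨯₃ Pᵀ p ⬝ᵥ u) * (Qᵀ n ⨯₃ Qᵀ q ⬝ᵥ v))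
      = ∑ i, ∑ j, u i * v j * (h m n * h p q * ((Pᵀ m ⨯₃ Pᵀ p) i * (Qᵀ n ⨯₃ Qᵀ q) j)) := by
    simp only [dotProduct, Finset.sum_mul, Finset.mul_sum]
    rw [Finset.sum_comm]
    exact Finset.sum_congr rfl fun i _ => Finset.sum_congr rfl fun j _ => by ring
  have swap (F : ι → κ → ι → κ → Fin 3 → R) :
      ∑ m, ∑ n, ∑ p, ∑ q, ∑ i, F m n p q i = ∑ i, ∑ m, ∑ n, ∑ p, ∑ q, F m n p q i := by
    simp only [Finset.sum_comm (t := (Finset.univ : Finset (Fin 3)))]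
  simp only [expand, swap, ← Finset.mul_sum, sum_mul_cross_mul_cross]
  simp only [dotProduct, mulVec, Finset.mul_sum, transpose_apply]
  exact Finset.sum_congr rfl fun i _ => Finset.sum_congr rfl fun j _ => by ring

end MinorSums

/-- A real matrix regarded as a complex one. -/
def complexify : M6 →ₐ[ℝ] Matrix (Fin 6) (Fin 6) ℂ := Complex.ofRealAm.mapMatrix

lemma complexify_apply (M : M6) (i j : Fin 6) : complexify M i j = M i j := rfl

lemma complexify_transpose (M : M6) : complexify Mᵀ = (complexify M)ᵀ := rfl

lemma complexify_conjTranspose (M : M6) : (complexify M)ᴴ = (complexify M)ᵀ := by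
  ext i j; simp [complexify_apply]

lemma trace_complexify (M : M6) : (complexify M).trace = M.trace :=
  (AddMonoidHom.map_trace Complex.ofRealHom M).symm

/-- The complex coordinates `dzᵏ = e²ᵏ⁻¹ + i e²ᵏ` on `(ℝ⁶, J)`; the `m`-th column is the image of
the `m`-th basis vector in `ℂ³`. -/
def dz : Matrix (Fin 3) (Fin 6) ℂ :=
  !![1, Complex.I, 0, 0, 0, 0;
     0, 0, 1, Complex.I, 0, 0;
     0, 0, 0, 0, 1, Complex.I]

lemma dz_apply (k : Fin 3) (m : Fin 6) :
    dz k m = kdelta (![0, 2, 4] k) m + kdelta (![1, 3, 5] k) m * Complex.I := by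
  fin_cases k <;> fin_cases m <;> simp [dz, kdelta]

lemma dz_mul_complexify_J6 : dz * complexify J6 = Complex.I • dz := by
  ext k m
  rw [mul_apply]
  fin_cases k <;> fin_cases m <;> simp [dz, Fin.sum_univ_six, complexify_apply, J6]

lemma dz_mul_conjTranspose : dz * dzᴴ = (2 : ℝ) • 1 := by
  ext k l
  rw [mul_apply]
  fin_cases k <;> fin_cases l <;> simp [dz, Fin.sum_univ_six, one_add_one_eq_two]

lemma dz_mul_transpose : dz * dzᵀ = 0 := by
  ext k l
  rw [mul_apply]
  fin_cases k <;> fin_cases l <;> simp [dz, Fin.sum_univ_six]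

lemma conjTranspose_dz_mul_dz_add : dzᴴ * dz + dzᵀ * dzᴴᵀ = (2 : ℝ) • 1 := by
  ext m n
  rw [Matrix.add_apply, mul_apply, mul_apply]
  fin_cases m <;> fin_cases n <;> simp [dz, Fin.sum_univ_three, one_add_one_eq_two]

lemma rhoP_eq_re_tripleProduct (m p a : Fin 6) : rhoP m p a = (dzᵀ m ⨯₃ dzᵀ p ⬝ᵥ dzᵀ a).re := by
  simp only [vec3_dotProduct, cross_apply, transpose_apply, dz_apply]
  simp only [rhoP, alt3, det_fin_three, of_apply, cons_val, Complex.add_re, Complex.add_im,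
    Complex.sub_re, Complex.sub_im, Complex.mul_re, Complex.mul_im, Complex.ofReal_re,
    Complex.ofReal_im, Complex.I_re, Complex.I_im]
  ring

/-- The complex-linear part `W` of a real endomorphism `z ↦ W z + Z z̄` of `ℂ³ ≅ ℝ⁶`. -/
def linearPart : M6 →ₗ[ℝ] Matrix (Fin 3) (Fin 3) ℂ where
  toFun M := (1 / 2 : ℝ) • (dz * complexify M * dzᴴ)
  map_add' M N := by simp [Matrix.mul_add, Matrix.add_mul]
  map_smul' r M := by simp [smul_comm r]

/-- The complex-antilinear part `Z` of a real endomorphism `z ↦ W z + Z z̄` of `ℂ³ ≅ ℝ⁶`. The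
entrywise conjugate of a matrix `X` is written `Xᴴᵀ`. -/
def antilinearPart : M6 →ₗ[ℝ] Matrix (Fin 3) (Fin 3) ℂ where
  toFun M := (1 / 2 : ℝ) • (dz * complexify M * dzᵀ)
  map_add' M N := by simp [Matrix.mul_add, Matrix.add_mul]
  map_smul' r M := by simp [smul_comm r]

lemma linearPart_apply (M : M6) :
    linearPart M = (1 / 2 : ℝ) • (dz * complexify M * dzᴴ) := rfl

lemma antilinearPart_apply (M : M6) :
    antilinearPart M = (1 / 2 : ℝ) • (dz * complexify M * dzᵀ) := rfl

lemma two_smul_linearPart (M : M6) : (2 : ℂ) • linearPart M = dz * complexify M * dzᴴ := by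
  rw [linearPart_apply]; module

lemma two_smul_antilinearPart (M : M6) :
    (2 : ℂ) • antilinearPart M = dz * complexify M * dzᵀ := by
  rw [antilinearPart_apply]; module

lemma linearPart_J6 : linearPart J6 = Complex.I • 1 := by
  rw [linearPart_apply, dz_mul_complexify_J6, smul_mul, dz_mul_conjTranspose]
  module

lemma antilinearPart_J6 : antilinearPart J6 = 0 := by
  simp [antilinearPart_apply, dz_mul_complexify_J6, dz_mul_transpose]

lemma linearPart_transpose (M : M6) : linearPart Mᵀ = (linearPart M)ᴴ := by
  simp [linearPart_apply, conjTranspose_mul, complexify_transpose, complexify_conjTranspose,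
    Matrix.mul_assoc]

lemma antilinearPart_transpose (M : M6) : antilinearPart Mᵀ = (antilinearPart M)ᵀ := by
  simp [antilinearPart_apply, transpose_mul, complexify_transpose, Matrix.mul_assoc]

lemma complexify_mul_eq_smul (M N : M6) : complexify (M * N) =
    (1 / 2 : ℝ) • (complexify M * (dzᴴ * dz + dzᵀ * dzᴴᵀ) * complexify N) := by
  simp [conjTranspose_dz_mul_dz_add]

lemma linearPart_mul (M N : M6) : linearPart (M * N) =
    linearPart M * linearPart N + antilinearPart M * (antilinearPart N)ᴴᵀ := by
  have hbar : dzᵀᴴᵀ = dzᴴ := rfl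
  rw [linearPart_apply, complexify_mul_eq_smul]
  simp [linearPart_apply, antilinearPart_apply, conjTranspose_mul, transpose_mul,
    complexify_conjTranspose, hbar, Matrix.mul_add, Matrix.add_mul, Matrix.mul_assoc]

lemma antilinearPart_mul (M N : M6) : antilinearPart (M * N) =
    linearPart M * antilinearPart N + antilinearPart M * (linearPart N)ᴴᵀ := by
  rw [antilinearPart_apply, complexify_mul_eq_smul]
  simp [linearPart_apply, antilinearPart_apply, transpose_mul, complexify_conjTranspose,
    Matrix.mul_add, Matrix.add_mul, Matrix.mul_assoc]

lemma trace_eq_two_mul_re_trace_linearPart (M : M6) :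
    M.trace = 2 * (linearPart M).trace.re := by
  have htrace : (M.trace : ℂ) = (linearPart M).trace + star (linearPart M).trace := by
    calc (M.trace : ℂ)
        = (1 / 2 : ℝ) • (complexify M * (dzᴴ * dz + dzᵀ * dzᴴᵀ)).trace := by
          simp [conjTranspose_dz_mul_dz_add, trace_complexify]
      _ = (1 / 2 : ℝ) • (dz * complexify M * dzᴴ).trace
            + (1 / 2 : ℝ) • (dzᴴᵀ * complexify M * dzᵀ).trace := by
          simp only [Matrix.mul_add, trace_add, smul_add, ← Matrix.mul_assoc, trace_mul_comm _ dz,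
            trace_mul_comm _ dzᴴᵀ]
      _ = (linearPart M).trace + star (linearPart M).trace := by
          rw [← trace_conjTranspose, ← linearPart_transpose, ← trace_transpose (linearPart Mᵀ)]
          simp [linearPart_apply, transpose_mul, complexify_transpose, Matrix.mul_assoc]
  simpa [two_mul] using congrArg Complex.re htrace

lemma star_tripleProduct {R : Type*} [CommRing R] [StarRing R] (u v w : Fin 3 → R) :
    star (u ⨯₃ v ⬝ᵥ w) = star u ⨯₃ star v ⬝ᵥ star w := by
  simp [vec3_dotProduct, cross_apply, -cons_dotProduct]

lemma re_mul_re (x y : ℂ) : x.re * y.re = ((x * y + x * star y) / 2).re := by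
  simp

lemma circ6_self_apply (h : M6) (a b : Fin 6) :
    circ6 h h a b = (dzᵀ a ⬝ᵥ (dz * complexify h * dzᵀ).adjugateᵀ *ᵥ dzᵀ b
      + dzᵀ a ⬝ᵥ (dz * complexify h * dzᴴ).adjugateᵀ *ᵥ dzᴴ b).re := by
  have hol := sum_mul_tripleProduct_mul_tripleProduct (complexify h) dz dz (dzᵀ a) (dzᵀ b)
  have mixed := sum_mul_tripleProduct_mul_tripleProduct (complexify h) dz dzᴴᵀ (dzᵀ a) (dzᴴ b)
  rw [transpose_transpose] at mixed
  have conj (n q : Fin 6) :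
      dzᴴ n ⨯₃ dzᴴ q ⬝ᵥ dzᴴ b = star (dzᵀ n ⨯₃ dzᵀ q ⬝ᵥ dzᵀ b) := (star_tripleProduct _ _ _).symm
  have term (m n p q : Fin 6) : h m n * h p q * rhoP m p a * rhoP n q b =
      ((complexify h m n * complexify h p q
          * ((dzᵀ m ⨯₃ dzᵀ p ⬝ᵥ dzᵀ a) * (dzᵀ n ⨯₃ dzᵀ q ⬝ᵥ dzᵀ b))
        + complexify h m n * complexify h p q
          * ((dzᵀ m ⨯₃ dzᵀ p ⬝ᵥ dzᵀ a) * (dzᴴ n ⨯₃ dzᴴ q ⬝ᵥ dzᴴ b))) / 2).re := by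
    rw [conj, ← mul_add, mul_div_assoc, mul_assoc, rhoP_eq_re_tripleProduct,
      rhoP_eq_re_tripleProduct, re_mul_re, complexify_apply, complexify_apply,
      ← Complex.ofReal_mul, Complex.re_ofReal_mul]
  simp only [circ6, of_apply, term, ← Complex.re_sum, ← Finset.sum_div, Finset.sum_add_distrib]
  rw [hol, mixed]
  congr 1
  ring

lemma circ6_self_eq_map_re (h : M6) :
    circ6 h h = (4 : ℝ) • (dzᵀ * (antilinearPart h).adjugateᵀ * dz
      + dzᵀ * (linearPart h).adjugateᵀ * dzᴴᵀ).map Complex.re := by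
  have entry (X : Matrix (Fin 3) (Fin 3) ℂ) (Q : Matrix (Fin 3) (Fin 6) ℂ) (a b : Fin 6) :
      (dzᵀ * Xᵀ * Q) a b = dzᵀ a ⬝ᵥ Xᵀ *ᵥ Qᵀ b := by
    rw [Matrix.mul_assoc]; rfl
  ext a b
  rw [circ6_self_apply, ← two_smul_antilinearPart, ← two_smul_linearPart, adjugate_smul,
    adjugate_smul, Matrix.smul_apply, map_apply, Matrix.add_apply, entry, entry]
  simp only [transpose_smul, smul_mulVec, dotProduct_smul, ← smul_add, transpose_transpose]
  norm_num [← Complex.ofReal_ofNat]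

lemma trace_transpose_mul_transpose_mul_mul_transpose {R m n : Type*} [CommSemiring R] [Fintype m]
    [Fintype n] (P Q : Matrix m n R) (X : Matrix m m R) (B : Matrix n n R) :
    (Pᵀ * Xᵀ * Q * Bᵀ).trace = (X * (P * B * Qᵀ)).trace := by
  rw [← trace_transpose]
  simp only [transpose_mul, transpose_transpose, ← Matrix.mul_assoc]
  rw [Matrix.mul_assoc (B * Qᵀ), trace_mul_comm, ← Matrix.mul_assoc]

lemma mdot_map_re (X : Matrix (Fin 6) (Fin 6) ℂ) (B : M6) :
    mdot (X.map Complex.re) B = (X * complexify Bᵀ).trace.re := by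
  simp [mdot, trace, mul_apply, complexify_apply]

lemma mdot_circ6_self (h B : M6) : mdot (circ6 h h) B =
    8 * (((antilinearPart h).adjugate * antilinearPart B).trace
      + ((linearPart h).adjugate * linearPart B).trace).re := by
  have anti : (dzᵀ * (antilinearPart h).adjugateᵀ * dz * complexify Bᵀ).trace =
      2 * ((antilinearPart h).adjugate * antilinearPart B).trace := by
    rw [complexify_transpose, trace_transpose_mul_transpose_mul_mul_transpose,
      ← two_smul_antilinearPart, Matrix.mul_smul, trace_smul, smul_eq_mul]
  have lin : (dzᵀ * (linearPart h).adjugateᵀ * dzᴴᵀ * complexify Bᵀ).trace =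
      2 * ((linearPart h).adjugate * linearPart B).trace := by
    rw [complexify_transpose, trace_transpose_mul_transpose_mul_mul_transpose, transpose_transpose,
      ← two_smul_linearPart, Matrix.mul_smul, trace_smul, smul_eq_mul]
  rw [circ6_self_eq_map_re, mdot, smul_mul, trace_smul, smul_eq_mul, ← mdot, mdot_map_re,
    Matrix.add_mul, trace_add, anti, lin]
  simp only [Complex.add_re, Complex.mul_re, Complex.re_ofNat, Complex.im_ofNat]
  ring

lemma mdot_self_eq_add (A : M6) : mdot A A = 2 * (linearPart A * (linearPart A)ᴴ).trace.re
    + 2 * (antilinearPart A * (antilinearPart A)ᴴ).trace.re := by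
  have hbar : (antilinearPart A)ᵀᴴᵀ = (antilinearPart A)ᴴ := rfl
  rw [mdot, trace_eq_two_mul_re_trace_linearPart, linearPart_mul, linearPart_transpose,
    antilinearPart_transpose, hbar, trace_add, Complex.add_re, mul_add]

lemma sq_add_mul_le_mul_add_of_sq_le {s k t x : ℝ} (hs : 0 ≤ s) (ht : t ^ 2 ≤ 3 * k)
    (hx : 3 ^ 3 * x ^ 2 ≤ t ^ 2 * s ^ 3) :
    s ^ 2 + 4 * t ^ 2 * k ≤ 4 * (s + t ^ 2) * (s + k) + 32 * x := by
  have hx_lower : -(32 * x) ≤ 3 * s ^ 2 + 16 / 3 * s * t ^ 2 := by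
    refine neg_le.1 (abs_le.1 (abs_le_of_sq_le_sq ?_ (by positivity))).1
    calc (32 * x) ^ 2 ≤ 64 * (t ^ 2 * s ^ 3) := by
          linarith [show 0 ≤ t ^ 2 * s ^ 3 by positivity]
      _ = 4 * (3 * s ^ 2) * (16 / 3 * s * t ^ 2) := by ring
      _ ≤ (3 * s ^ 2 + 16 / 3 * s * t ^ 2) ^ 2 := four_mul_le_sq_add _ _
  linarith [mul_le_mul_of_nonneg_left ht hs]

section InSp

variable {A : M6}

lemma inSp.conjTranspose_linearPart (hA : inSp A) : (linearPart A)ᴴ = -linearPart A := by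
  have h := congrArg linearPart hA
  simp only [map_add, linearPart_mul, linearPart_J6, antilinearPart_J6, linearPart_transpose] at h
  have h' : Complex.I • (linearPart A + (linearPart A)ᴴ) = 0 := by simpa using h
  exact eq_neg_of_add_eq_zero_right ((smul_eq_zero.1 h').resolve_left Complex.I_ne_zero)

lemma inSp.transpose_antilinearPart (hA : inSp A) : (antilinearPart A)ᵀ = antilinearPart A := by
  have h := congrArg antilinearPart hA
  simp only [map_add, antilinearPart_mul, linearPart_J6, antilinearPart_J6,
    antilinearPart_transpose] at h
  have h' : Complex.I • ((antilinearPart A)ᵀ - antilinearPart A) = 0 := by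
    simpa [smul_sub, neg_add_eq_sub] using h
  exact sub_eq_zero.1 ((smul_eq_zero.1 h').resolve_left Complex.I_ne_zero)

lemma inSp.linearPart_symPart (hA : inSp A) : linearPart (symPart A) = 0 := by
  rw [symPart, map_smul, map_add, linearPart_transpose, hA.conjTranspose_linearPart,
    add_neg_cancel, smul_zero]

lemma inSp.antilinearPart_symPart (hA : inSp A) :
    antilinearPart (symPart A) = antilinearPart A := by
  rw [symPart, map_smul, map_add, antilinearPart_transpose, hA.transpose_antilinearPart]
  module

lemma inSp.mdot_symPart_self_eq (hA : inSp A) : mdot (symPart A) (symPart A) =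
    2 * (antilinearPart A * (antilinearPart A)ᴴ).trace.re := by
  rw [mdot_self_eq_add, hA.linearPart_symPart, hA.antilinearPart_symPart, Matrix.zero_mul,
    trace_zero, Complex.zero_re, mul_zero, zero_add]

lemma inSp.trace_J6_mul_sq (hA : inSp A) :
    (J6 * A).trace ^ 2 = 4 * ‖(linearPart A).trace‖ ^ 2 := by
  have hre : (linearPart A).trace.re = 0 := by
    have htr := congrArg (fun M => (trace M).re) hA.conjTranspose_linearPart
    simp only [trace_conjTranspose, trace_neg, Complex.star_def, Complex.conj_re,
      Complex.neg_re] at htr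
    linarith
  rw [trace_eq_two_mul_re_trace_linearPart, linearPart_mul, linearPart_J6, antilinearPart_J6,
    Complex.sq_norm, Complex.normSq_apply, hre]
  simp only [Algebra.smul_mul_assoc, one_mul, zero_mul, add_zero, trace_smul, smul_eq_mul,
    Complex.mul_re, Complex.I_re, Complex.I_im]
  ring

lemma inSp.antilinearPart_mcomm_transpose (hA : inSp A) : antilinearPart (mcomm A Aᵀ) =
    (2 : ℝ) • (linearPart A * antilinearPart A + antilinearPart A * (linearPart A)ᵀ) := by
  have hW : (linearPart A)ᴴᵀ = -(linearPart A)ᵀ := by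
    rw [hA.conjTranspose_linearPart, transpose_neg]
  rw [mcomm, map_sub, antilinearPart_mul, antilinearPart_mul, linearPart_transpose,
    antilinearPart_transpose, hA.transpose_antilinearPart, conjTranspose_conjTranspose, hW,
    hA.conjTranspose_linearPart, Matrix.mul_neg, Matrix.neg_mul]
  module

lemma inSp.mdot_circ6_symPart_mcomm (hA : inSp A) :
    mdot (circ6 (symPart A) (symPart A)) (mcomm A Aᵀ) =
      32 * ((antilinearPart A).det * (linearPart A).trace).re := by
  have cyclic : ((antilinearPart A).adjugate * (linearPart A * antilinearPart A
      + antilinearPart A * (linearPart A)ᵀ)).trace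
      = 2 * ((antilinearPart A).det * (linearPart A).trace) := by
    rw [Matrix.mul_add, trace_add, ← Matrix.mul_assoc, trace_mul_comm, ← Matrix.mul_assoc,
      ← Matrix.mul_assoc, mul_adjugate, adjugate_mul, smul_mul, smul_mul, Matrix.one_mul,
      Matrix.one_mul, trace_smul, trace_smul, trace_transpose, smul_eq_mul, two_mul]
  rw [mdot_circ6_self, hA.linearPart_symPart, hA.antilinearPart_symPart, adjugate_zero,
    Matrix.zero_mul, trace_zero, add_zero, hA.antilinearPart_mcomm_transpose, Matrix.mul_smul,
    trace_smul, cyclic, Complex.smul_re, smul_eq_mul, two_mul (_ * _), Complex.add_re]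
  ring

lemma inSp.sq_mdot_symPart_add_le (hA : inSp A) :
    mdot (symPart A) (symPart A) ^ 2 / 4
        + (J6 * A).trace ^ 2 * (mdot A A - mdot (symPart A) (symPart A)) / 2
      ≤ (mdot (symPart A) (symPart A) + (1 / 2) * (J6 * A).trace ^ 2) * mdot A A
        + mdot (circ6 (symPart A) (symPart A)) (mcomm A Aᵀ) := by
  have hs : 0 ≤ (antilinearPart A * (antilinearPart A)ᴴ).trace.re :=
    (Complex.nonneg_iff.1 (posSemidef_self_mul_conjTranspose (antilinearPart A)).trace_nonneg).1
  have ht : ‖(linearPart A).trace‖ ^ 2 ≤ 3 * (linearPart A * (linearPart A)ᴴ).trace.re := by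
    simpa using norm_trace_sq_le_card_mul (linearPart A)
  have hdet : 3 ^ 3 * ‖(antilinearPart A).det‖ ^ 2
      ≤ (antilinearPart A * (antilinearPart A)ᴴ).trace.re ^ 3 := by
    simpa using card_pow_mul_norm_det_sq_le (antilinearPart A)
  have hx : 3 ^ 3 * ((antilinearPart A).det * (linearPart A).trace).re ^ 2
      ≤ ‖(linearPart A).trace‖ ^ 2 * (antilinearPart A * (antilinearPart A)ᴴ).trace.re ^ 3 := by
    calc 3 ^ 3 * ((antilinearPart A).det * (linearPart A).trace).re ^ 2
        ≤ 3 ^ 3 * ‖(antilinearPart A).det * (linearPart A).trace‖ ^ 2 := by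
          rw [← sq_abs (Complex.re _)]
          gcongr
          exact Complex.abs_re_le_norm _
      _ = ‖(linearPart A).trace‖ ^ 2 * (3 ^ 3 * ‖(antilinearPart A).det‖ ^ 2) := by
          rw [norm_mul]
          ring
      _ ≤ _ := by gcongr
  rw [hA.mdot_symPart_self_eq, hA.trace_J6_mul_sq, mdot_self_eq_add, hA.mdot_circ6_symPart_mcomm]
  linarith [sq_add_mul_le_mul_add_of_sq_le hs ht hx]

lemma inSp.mcomm_J6_eq_zero (hA : inSp A) (hskew : Aᵀ = -A) : mcomm J6 A = 0 := by
  have h := hA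
  rw [inSp, hskew, Matrix.mul_neg, add_neg_eq_zero] at h
  rw [mcomm, h, sub_self]

end InSp

/-- The soliton constant
`c = −½(tr(S_A²) + ½(tr JA)² + (|[A,Aᵗ]|² + ⟨S_A ∘₆ S_A,[A,Aᵗ]⟩)/|A|²)` of a
(semi-)algebraic soliton satisfies `c ≤ 0`; and `c = 0` forces `Aᵗ = −A`, `tr(JA) = 0`
and `[J,A] = 0`, i.e. vanishing full torsion. Hence every (semi-)algebraic soliton of
the Laplacian coflow on an almost Abelian Lie group is expanding, and steady only if
torsion-free. -/
theorem soliton_expanding (A : M6) (hA : inSp A) (hA0 : A ≠ 0) (c : ℝ)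
    (hc : c = -(1/2) * ((symPart A * symPart A).trace + (1/2) * ((J6 * A).trace)^2
      + (mdot (mcomm A Aᵀ) (mcomm A Aᵀ)
          + mdot (circ6 (symPart A) (symPart A)) (mcomm A Aᵀ)) / mdot A A)) :
    c ≤ 0 ∧ (c = 0 → Aᵀ = -A ∧ (J6 * A).trace = 0 ∧ mcomm J6 A = 0) := by
  rw [← mdot_symPart_self] at hc
  have hA_pos : 0 < mdot A A := (mdot_self_nonneg A).lt_of_ne' (mdot_self_eq_zero_iff.not.2 hA0)
  have hS := mdot_self_nonneg (symPart A)
  have hK : 0 ≤ (J6 * A).trace ^ 2 * (mdot A A - mdot (symPart A) (symPart A)) :=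
    mul_nonneg (sq_nonneg _) (sub_nonneg.2 (mdot_symPart_self_le A))
  have lower : mdot (symPart A) (symPart A) ^ 2 / 4
      + (J6 * A).trace ^ 2 * (mdot A A - mdot (symPart A) (symPart A)) / 2
      ≤ -2 * c * mdot A A := by
    have hcA : -2 * c * mdot A A = (mdot (symPart A) (symPart A) + (1 / 2) * (J6 * A).trace ^ 2)
        * mdot A A + mdot (circ6 (symPart A) (symPart A)) (mcomm A Aᵀ)
        + mdot (mcomm A Aᵀ) (mcomm A Aᵀ) := by
      rw [hc]; field_simp; ring
    linarith [hA.sq_mdot_symPart_add_le, mdot_self_nonneg (mcomm A Aᵀ)]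
  refine ⟨by nlinarith [sq_nonneg (mdot (symPart A) (symPart A))], ?_⟩
  rintro rfl
  have hS0 : mdot (symPart A) (symPart A) = 0 := by nlinarith
  have hskew : Aᵀ = -A := symPart_eq_zero_iff.1 (mdot_self_eq_zero_iff.1 hS0)
  have htr : (J6 * A).trace = 0 := by
    rw [hS0] at lower
    exact (pow_eq_zero_iff two_ne_zero).1 (by nlinarith [sq_nonneg (J6 * A).trace])
  exact ⟨hskew, htr, hA.mcomm_J6_eq_zero hskew⟩
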